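/- (α-representation of the free evolution kernel; Lemma 2.1 of the paper, identity part.) For every integer m ≥ 1, every t > 0, every η > 0 and all momenta p₀, …, p_m ∈ ℝ³, the function α ↦ e^{−iαt} ∏_{j=0}^{m} (α − |p_j|²/2 + iη)^{−1} is absolutely integrable on ℝ, and K(t; p₀, …, p_m) = (i/(2π)) e^{ηt} ∫_ℝ e^{−iαt} ∏_{j=0}^{m} (α − |p_j|²/2 + iη)^{−1} dα. -/

import Mathlib

noncomputable section

open MeasureTheory Complex

abbrev E3 := EuclideanSpace ℝ (Fin 3)

/-- Integration of a function over the simplex `{(s₀,…,s_b) : s_j ≥ 0, s₀+⋯+s_b = t}`,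
parametrized by `(s₀,…,s_{b-1}) ∈ [0,∞)^b` with `s_b := t - (s₀+⋯+s_{b-1}) ≥ 0`. -/
def simplexInt (b : ℕ) (t : ℝ) (F : (Fin (b + 1) → ℝ) → ℂ) : ℂ :=
  ∫ s : Fin b → ℝ,
    Set.indicator {s : Fin b → ℝ | (∀ j, 0 ≤ s j) ∧ (∑ j, s j) ≤ t}
      (fun s => F (Fin.snoc s (t - ∑ j, s j))) s

/-- The free evolution kernel `K(t; p₀, …, p_m)`. -/
def freeKernel (m : ℕ) (t : ℝ) (p : Fin (m + 1) → E3) : ℂ :=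
  (-Complex.I) ^ m *
    simplexInt m t (fun s =>
      Complex.exp (-Complex.I * ∑ j : Fin (m + 1), (s j : ℂ) * ((‖p j‖ ^ 2 / 2 : ℝ) : ℂ)))

/-!
Since `s₀ + ⋯ + s_m = t`, damping every factor `exp (-i a_j s)` by `exp (-η s)` only multiplies the
simplex integral by `exp (-η t)`. The damped integral is the value at `t` of a convolution of
`m + 1` integrable causal exponentials, so its Fourier transform is a product of resolvents. For
`m ≥ 1` the convolution is continuous and the product is integrable (two factors are in `L²`, the
others are bounded), hence Fourier inversion applies at every `t`; the substitution `α = -2πw`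
turns Mathlib's frequency `w` into the energy `α`.
-/

open scoped FourierTransform RealInnerProductSpace

section MultiConvolution

/-- The convolution `f₀ ⋆ ⋯ ⋆ f_m` of `m + 1` functions on an additive group, as a single integral
over `Gᵐ`: the argument of the last factor is what remains of `t`, as in `simplexInt`. -/
def multiConv {G : Type*} [AddCommGroup G] [MeasureSpace G] {m : ℕ} (f : Fin (m + 1) → G → ℂ)
    (t : G) : ℂ :=
  ∫ s : Fin m → G, (∏ j, f j.castSucc (s j)) * f (Fin.last m) (t - ∑ j, s j)

variable {G : Type*} [AddCommGroup G] [MeasureSpace G] {m : ℕ} {f : Fin (m + 1) → G → ℂ}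

lemma addChar_mul_multiConv (χ : AddChar G ℂ) (f : Fin (m + 1) → G → ℂ) (t : G) :
    χ t * multiConv f t = multiConv (fun j x => χ x * f j x) t := by
  have hχ (s : Fin m → G) : χ t = (∏ j, χ (s j)) * χ (t - ∑ j, s j) := by
    have hsum : χ (∑ j, s j) = ∏ j, χ (s j) :=
      map_prod χ.toMonoidHom (fun j => Multiplicative.ofAdd (s j)) Finset.univ
    rw [← hsum, ← AddChar.map_add_eq_mul, add_sub_cancel]
  rw [multiConv, multiConv, ← integral_const_mul]
  congr 1 with s
  rw [hχ s, Finset.prod_mul_distrib]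
  ring

variable [MeasurableAdd₂ G] [SigmaFinite (volume : Measure G)]
  [(volume : Measure G).IsAddLeftInvariant]

lemma quasiMeasurePreserving_sum (m : ℕ) :
    Measure.QuasiMeasurePreserving fun s : Fin (m + 1) → G => ∑ j, s j := by
  have hadd : Measure.QuasiMeasurePreserving fun q : G × (Fin m → G) => q.1 + ∑ j, q.2 j :=
    QuasiMeasurePreserving.prod_of_left (by fun_prop) (ae_of_all _ fun s =>
      (measurePreserving_add_right volume (∑ j, s j)).quasiMeasurePreserving)
  simpa [Function.comp_def, Fin.sum_univ_succ, Fin.removeNth_zero, Fin.tail] using!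
    hadd.comp (volume_preserving_piFinSuccAbove (fun _ => G) 0).quasiMeasurePreserving

variable [MeasurableNeg G]

lemma measurePreserving_prodMk_sub_sum {ι : Type*} [Fintype ι] :
    MeasurePreserving (fun q : (ι → G) × G => (q.1, q.2 - ∑ j, q.1 j)) :=
  (MeasurePreserving.id volume).skew_product (g := fun (s : ι → G) u => u - ∑ j, s j)
    (by fun_prop) (ae_of_all _ fun s => (measurePreserving_sub_right volume (∑ j, s j)).map_eq)

lemma integrable_multiConv_integrand (hf : ∀ j, Integrable (f j)) :
    Integrable fun q : (Fin m → G) × G =>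
      (∏ j, f j.castSucc (q.1 j)) * f (Fin.last m) (q.2 - ∑ j, q.1 j) :=
  measurePreserving_prodMk_sub_sum.integrable_comp_of_integrable
    ((Integrable.fintype_prod fun j : Fin m => hf j.castSucc).mul_prod (hf (Fin.last m)))

lemma integrable_multiConv (hf : ∀ j, Integrable (f j)) : Integrable (multiConv f) :=
  (integrable_multiConv_integrand hf).integral_prod_right

lemma integral_multiConv (hf : ∀ j, Integrable (f j)) :
    ∫ t, multiConv f t = ∏ j, ∫ x, f j x := by
  calc ∫ t, multiConv f t
      = ∫ s : Fin m → G, ∫ t, (∏ j, f j.castSucc (s j)) * f (Fin.last m) (t - ∑ j, s j) :=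
        (integral_integral_swap (integrable_multiConv_integrand hf)).symm
    _ = ∫ s : Fin m → G, (∏ j, f j.castSucc (s j)) * ∫ x, f (Fin.last m) x := by
        simp_rw [integral_const_mul, integral_sub_right_eq_self]
    _ = ∏ j, ∫ x, f j x := by
        rw [integral_mul_const, integral_fintype_prod_volume_eq_prod, Fin.prod_univ_castSucc]

lemma continuous_multiConv [TopologicalSpace G] [FirstCountableTopology G] [ContinuousSub G]
    (hm : m ≠ 0) (hf : ∀ j, Integrable (f j)) {C : ℝ} (hbdd : ∀ x, ‖f (Fin.last m) x‖ ≤ C)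
    (hcont : ∀ᵐ x, ContinuousAt (f (Fin.last m)) x) : Continuous (multiConv f) := by
  obtain ⟨k, rfl⟩ := Nat.exists_eq_succ_of_ne_zero hm
  have hprod := Integrable.fintype_prod fun j : Fin (k + 1) => hf j.castSucc
  have hrest (t : G) : Measure.QuasiMeasurePreserving fun s : Fin (k + 1) → G => t - ∑ j, s j :=
    (quasiMeasurePreserving_sub_left volume t).comp (quasiMeasurePreserving_sum k)
  refine continuous_iff_continuousAt.2 fun t => continuousAt_of_dominated
    (.of_forall fun u => hprod.1.mul ((hf _).1.comp_quasiMeasurePreserving (hrest u)))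
    (.of_forall fun u => ae_of_all _ fun s => ?_) (hprod.norm.mul_const C) ?_
  · rw [norm_mul]
    exact mul_le_mul_of_nonneg_left (hbdd _) (norm_nonneg _)
  · filter_upwards [(hrest t).ae hcont] with s hs
    exact continuousAt_const.mul (hs.comp (f := fun u => u - ∑ j, s j) (by fun_prop))

end MultiConvolution

section Fourier

lemma fourier_multiConv {V : Type*} [NormedAddCommGroup V] [InnerProductSpace ℝ V]
    [FiniteDimensional ℝ V] [MeasurableSpace V] [BorelSpace V] {m : ℕ}
    {f : Fin (m + 1) → V → ℂ} (hf : ∀ j, Integrable (f j)) (w : V) :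
    𝓕 (multiConv f) w = ∏ j, 𝓕 (f j) w := by
  let χ : AddChar V ℂ := Circle.coeHom.compAddChar
    (Real.fourierChar.compAddMonoidHom (-innerₗ V w).toAddMonoidHom)
  have hχ (g : V → ℂ) (v : V) : 𝐞 (-⟪v, w⟫) • g v = χ v * g v := by
    rw [real_inner_comm]
    rfl
  have hχf (j : Fin (m + 1)) : Integrable fun v => χ v * f j v := by
    simp_rw [← hχ]
    exact (Real.fourierIntegral_convergent_iff w).2 (hf j)
  simp_rw [Real.fourier_eq, hχ, addChar_mul_multiConv, integral_multiConv hχf]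

lemma eq_integral_of_fourier_eq_comp_neg_two_pi_mul {E : Type*} [NormedAddCommGroup E]
    [NormedSpace ℂ E] [CompleteSpace E] {f g : ℝ → E} (hcont : Continuous f) (hf : Integrable f)
    (hg : Integrable g) (hfg : ∀ w, 𝓕 f w = g (-(2 * Real.pi) * w)) (t : ℝ) :
    f t = (2 * Real.pi)⁻¹ • ∫ α : ℝ, Complex.exp (-I * α * t) • g α := by
  have hπ : -(2 * Real.pi) ≠ 0 := neg_ne_zero.2 Real.two_pi_pos.ne'
  have hFf : Integrable (𝓕 f) := by
    rw [funext hfg]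
    exact hg.comp_mul_left' hπ
  calc f t = 𝓕⁻ (𝓕 f) t := by rw [hcont.fourierInv_fourier_eq hf hFf]
    _ = ∫ w : ℝ, Complex.exp (-I * ↑(-(2 * Real.pi) * w) * t) • g (-(2 * Real.pi) * w) := by
        rw [Real.fourierInv_eq']
        congr 1 with w
        rw [hfg]
        congr 2
        simp only [RCLike.inner_apply, conj_trivial]
        push_cast
        ring
    _ = (2 * Real.pi)⁻¹ • ∫ α : ℝ, Complex.exp (-I * α * t) • g α := by
        rw [Measure.integral_comp_mul_left (fun α : ℝ => Complex.exp (-I * α * t) • g α),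
          inv_neg, abs_neg, abs_of_pos (inv_pos.2 Real.two_pi_pos)]

end Fourier

section CausalExponential

/-- The exponential `x ↦ exp (-z x)` cut off to `x ≥ 0`: the time evolution whose Fourier transform
is the resolvent `(z - iα)⁻¹`. -/
def causalExp (z : ℂ) : ℝ → ℂ :=
  Set.indicator (Set.Ici 0) fun x => Complex.exp (-z * x)

variable {z : ℂ}

lemma exp_mul_causalExp (c z : ℂ) (x : ℝ) :
    Complex.exp (c * x) * causalExp (c + z) x = causalExp z x := by
  rw [causalExp, causalExp, ← Set.indicator_mul_right _ fun x : ℝ => Complex.exp (c * x)]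
  simp_rw [← Complex.exp_add]
  congr! 3
  ring

lemma integrable_causalExp (hz : 0 < z.re) : Integrable (causalExp z) := by
  rw [causalExp, integrable_indicator_iff measurableSet_Ici, integrableOn_Ici_iff_integrableOn_Ioi]
  exact integrableOn_exp_mul_complex_Ioi (by simpa using hz) 0

lemma norm_causalExp_le_one (hz : 0 ≤ z.re) (x : ℝ) : ‖causalExp z x‖ ≤ 1 := by
  rw [causalExp, norm_indicator_eq_indicator_norm]
  refine Set.indicator_apply_le' (fun hx => ?_) fun _ => zero_le_one
  rw [Complex.norm_exp, Real.exp_le_one_iff]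
  simpa using mul_nonneg hz hx

lemma continuousAt_causalExp (z : ℂ) {x : ℝ} (hx : x ≠ 0) : ContinuousAt (causalExp z) x := by
  have hexp : Continuous fun x : ℝ => Complex.exp (-z * x) := by fun_prop
  exact hexp.continuousOn.continuousAt_indicator (by simpa [frontier_Ici] using hx)

lemma fourier_causalExp (hz : 0 < z.re) (w : ℝ) :
    𝓕 (causalExp z) w = (z + 2 * Real.pi * w * I)⁻¹ := by
  set ζ : ℂ := z + 2 * Real.pi * w * I
  have hζ : (-ζ).re < 0 := by simpa [ζ] using hz
  have hmodulate (x : ℝ) :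
      Complex.exp (↑(-2 * Real.pi * x * w) * I) • causalExp z x = causalExp ζ x := by
    rw [← exp_mul_causalExp (-(2 * Real.pi * w * I)) ζ x, smul_eq_mul]
    congr 2
    · push_cast
      ring
    · simp [ζ]
  calc 𝓕 (causalExp z) w = ∫ x, causalExp ζ x := by
        simp_rw [Real.fourier_real_eq_integral_exp_smul, hmodulate]
    _ = ∫ x : ℝ in Set.Ioi 0, Complex.exp (-ζ * x) := by
        rw [causalExp, integral_indicator measurableSet_Ici, integral_Ici_eq_integral_Ioi]
    _ = ζ⁻¹ := by
        rw [integral_exp_mul_complex_Ioi hζ, ofReal_zero, mul_zero, Complex.exp_zero,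
          neg_div_neg_eq, one_div]

end CausalExponential

section Resolvent

lemma integrable_prod_of_memLp_two_of_memLp_top {X ι R : Type*} [MeasurableSpace X]
    {μ : Measure X} [NormedCommRing R] [Fintype ι] [Nontrivial ι] {f : ι → X → R}
    (h₂ : ∀ j, MemLp (f j) 2 μ) (h_top : ∀ j, MemLp (f j) ⊤ μ) :
    Integrable (fun x => ∏ j, f j x) μ := by
  classical
  obtain ⟨i, j, hij⟩ := exists_pair_ne ι
  have hrest : MemLp (fun x => ∏ k ∈ Finset.univ \ {i, j}, f k x) ⊤ μ := by
    simpa using MemLp.prod' (s := Finset.univ \ {i, j}) fun k _ => h_top k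
  have hsplit : (fun x => ∏ k, f k x) =
      fun x => (f i x * f j x) * ∏ k ∈ Finset.univ \ {i, j}, f k x := by
    ext x
    rw [← Finset.prod_sdiff (Finset.subset_univ {i, j}), Finset.prod_pair hij, mul_comm]
  rw [hsplit]
  exact memLp_one_iff_integrable.1 (hrest.mul' ((h₂ j).mul' (h₂ i) : MemLp _ 1 μ))

variable {z : ℂ}

lemma continuous_inv_sub_I_mul (hz : z.re ≠ 0) : Continuous fun α : ℝ => (z - I * α)⁻¹ :=
  Continuous.inv₀ (by fun_prop) fun α h => hz (by simpa using congrArg re h)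

lemma memLp_top_inv_sub_I_mul (hz : z.re ≠ 0) : MemLp (fun α : ℝ => (z - I * α)⁻¹) ⊤ := by
  refine memLp_top_of_bound (continuous_inv_sub_I_mul hz).aestronglyMeasurable |z.re|⁻¹
    (ae_of_all _ fun α => ?_)
  rw [norm_inv]
  exact inv_anti₀ (abs_pos.2 hz) (by simpa using abs_re_le_norm (z - I * α))

lemma memLp_two_inv_sub_I_mul (hz : z.re ≠ 0) : MemLp (fun α : ℝ => (z - I * α)⁻¹) 2 := by
  rw [memLp_two_iff_integrable_sq_norm (continuous_inv_sub_I_mul hz).aestronglyMeasurable]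
  have hlorentz := ((integrable_inv_one_add_sq.comp_mul_left' (inv_ne_zero hz)).comp_sub_right
    z.im).const_mul (z.re ^ 2)⁻¹
  refine hlorentz.congr (ae_of_all _ fun α => ?_)
  have hnorm : ‖z - I * α‖ ^ 2 = z.re ^ 2 + (α - z.im) ^ 2 := by
    simp only [Complex.sq_norm, normSq_apply, sub_re, sub_im, I_mul_re, I_mul_im, ofReal_re,
      ofReal_im]
    ring
  simp only [norm_inv, inv_pow, hnorm, ← mul_inv]
  congr 1
  field_simp

lemma integrable_prod_inv_sub_I_mul {ι : Type*} [Fintype ι] [Nontrivial ι] {z : ι → ℂ}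
    (hz : ∀ j, (z j).re ≠ 0) : Integrable fun α : ℝ => ∏ j, (z j - I * α)⁻¹ :=
  integrable_prod_of_memLp_two_of_memLp_top (fun j => memLp_two_inv_sub_I_mul (hz j))
    fun j => memLp_top_inv_sub_I_mul (hz j)

lemma prod_inv_sub_add_I_mul {ι : Type*} [Fintype ι] (η α : ℂ) (a : ι → ℂ) :
    ∏ j, (α - a j + I * η)⁻¹ = (-I) ^ Fintype.card ι * ∏ j, (η + I * a j - I * α)⁻¹ := by
  rw [← Finset.card_univ, ← Finset.prod_const, ← Finset.prod_mul_distrib]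
  refine Finset.prod_congr rfl fun j _ => ?_
  rw [← inv_I, ← mul_inv]
  congr 1
  linear_combination (α - a j) * I_sq

end Resolvent

lemma multiConv_causalExp_eq_integral {m : ℕ} (hm : 1 ≤ m) {z : Fin (m + 1) → ℂ}
    (hz : ∀ j, 0 < (z j).re) (t : ℝ) :
    multiConv (fun j => causalExp (z j)) t =
      (2 * Real.pi)⁻¹ • ∫ α : ℝ, Complex.exp (-I * α * t) • ∏ j, (z j - I * α)⁻¹ := by
  have : Nontrivial (Fin (m + 1)) := Fin.nontrivial_iff_two_le.2 (by lia)
  have hint (j : Fin (m + 1)) := integrable_causalExp (hz j)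
  have hcont : Continuous (multiConv fun j => causalExp (z j)) :=
    continuous_multiConv (by lia) hint (norm_causalExp_le_one (hz _).le)
      ((Measure.ae_ne volume 0).mono fun _ => continuousAt_causalExp _)
  refine eq_integral_of_fourier_eq_comp_neg_two_pi_mul hcont (integrable_multiConv hint)
    (integrable_prod_inv_sub_I_mul fun j => (hz j).ne') (fun w => ?_) t
  rw [fourier_multiConv hint]
  refine Finset.prod_congr rfl fun j _ => ?_
  rw [fourier_causalExp (hz j)]
  push_cast
  ring

lemma simplexInt_prod_eq_multiConv {m : ℕ} (g : Fin (m + 1) → ℝ → ℂ) (t : ℝ) :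
    simplexInt m t (fun s => ∏ j, g j (s j)) =
      multiConv (fun j => (Set.Ici 0).indicator (g j)) t := by
  rw [simplexInt, multiConv]
  congr 1 with s
  simp only [Fin.prod_univ_castSucc, Fin.snoc_castSucc, Fin.snoc_last, Set.indicator_apply,
    Set.mem_ofPred_eq, Set.mem_Ici, sub_nonneg, Fintype.prod_ite_zero, ite_zero_mul_ite_zero]
  congr

lemma simplexInt_exp_eq_exp_mul_multiConv {m : ℕ} (a : Fin (m + 1) → ℂ) (η t : ℝ) :
    simplexInt m t (fun s => Complex.exp (-I * ∑ j, s j * a j)) =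
      Complex.exp ((η * t : ℝ)) * multiConv (fun j => causalExp (η + I * a j)) t := by
  let damping : AddChar ℝ ℂ :=
    { toFun x := Complex.exp (η * x)
      map_zero_eq_one' := by simp
      map_add_eq_mul' x y := by rw [ofReal_add, mul_add, Complex.exp_add] }
  have hprod (s : Fin (m + 1) → ℝ) :
      Complex.exp (-I * ∑ j, s j * a j) = ∏ j, Complex.exp (-(I * a j) * s j) := by
    rw [← Complex.exp_sum, Finset.mul_sum]
    congr! 2
    ring
  calc simplexInt m t (fun s => Complex.exp (-I * ∑ j, s j * a j))
      = multiConv (fun j => causalExp (I * a j)) t := by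
        simp_rw [hprod]
        exact simplexInt_prod_eq_multiConv (fun j x => Complex.exp (-(I * a j) * x)) t
    _ = multiConv (fun j x => damping x * causalExp (η + I * a j) x) t := by
        exact congrArg (multiConv · t) (funext₂ fun j x => (exp_mul_causalExp η (I * a j) x).symm)
    _ = Complex.exp ((η * t : ℝ)) * multiConv (fun j => causalExp (η + I * a j)) t := by
        rw [← addChar_mul_multiConv, ofReal_mul]
        rfl

theorem alpha_representation_general {m : ℕ} (hm : 1 ≤ m) {η : ℝ} {a : Fin (m + 1) → ℂ}
    (ha : ∀ j, (a j).im < η) (t : ℝ) :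
    Integrable (fun α : ℝ => Complex.exp (-I * α * t) * ∏ j, ((α : ℂ) - a j + I * η)⁻¹) ∧
    (-I) ^ m * simplexInt m t (fun s => Complex.exp (-I * ∑ j, (s j : ℂ) * a j)) =
      I / (2 * Real.pi) * Complex.exp ((η * t : ℝ)) *
        ∫ α : ℝ, Complex.exp (-I * α * t) * ∏ j, ((α : ℂ) - a j + I * η)⁻¹ := by
  have : Nontrivial (Fin (m + 1)) := Fin.nontrivial_iff_two_le.2 (by lia)
  have hre (j : Fin (m + 1)) : 0 < (η + I * a j).re := by simpa using ha j
  simp_rw [prod_inv_sub_add_I_mul, Fintype.card_fin]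
  constructor
  · refine ((integrable_prod_inv_sub_I_mul fun j => (hre j).ne').const_mul _).bdd_mul (c := 1)
      (Continuous.aestronglyMeasurable (by fun_prop)) (ae_of_all _ fun α => ?_)
    simp [Complex.norm_exp]
  · simp_rw [simplexInt_exp_eq_exp_mul_multiConv a η t, multiConv_causalExp_eq_integral hm hre,
      real_smul, smul_eq_mul, mul_left_comm _ ((-I) ^ (m + 1)), integral_const_mul, pow_succ]
    push_cast
    linear_combination (-I) ^ m * Complex.exp (η * t) * (2 * Real.pi : ℂ)⁻¹ *
      (∫ α : ℝ, Complex.exp (-I * α * t) * ∏ j, (η + I * a j - I * α)⁻¹) * I_sq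

/-- α-representation of the free evolution kernel (Lemma 2.1, identity part):
for `m ≥ 1`, `t > 0`, `η > 0`, the function
`α ↦ e^{-iαt} ∏_j (α - |p_j|²/2 + iη)⁻¹` is absolutely integrable on `ℝ`, and
`K(t; p₀, …, p_m) = (i/(2π)) e^{ηt} ∫ e^{-iαt} ∏_j (α - |p_j|²/2 + iη)⁻¹ dα`. -/
theorem alpha_representation (m : ℕ) (hm : 1 ≤ m) (t : ℝ) (ht : 0 < t)
    (η : ℝ) (hη : 0 < η) (p : Fin (m + 1) → E3) :
    Integrable (fun α : ℝ => Complex.exp (-Complex.I * α * t) *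
      ∏ j : Fin (m + 1), ((α : ℂ) - ((‖p j‖ ^ 2 / 2 : ℝ) : ℂ) + Complex.I * η)⁻¹) ∧
    freeKernel m t p = Complex.I / (2 * Real.pi) * Complex.exp ((η * t : ℝ)) *
      ∫ α : ℝ, Complex.exp (-Complex.I * α * t) *
        ∏ j : Fin (m + 1), ((α : ℂ) - ((‖p j‖ ^ 2 / 2 : ℝ) : ℂ) + Complex.I * η)⁻¹ :=
  alpha_representation_general hm (a := fun j => ((‖p j‖ ^ 2 / 2 : ℝ) : ℂ))
    (fun j => by simpa only [ofReal_im] using hη) t
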